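/- arXiv:2605.08481 — 2 statements merged into one kernel-verified Lean document; each statement's English description precedes it below -/
import Mathlib

section
/- Let $\gamma \in \mathbb{R}$ and set $K := \lceil 4|\gamma| \rceil + 1$. Define $\epsilon^0_{2a-1}(\kappa) := (a-1+\kappa)^2$, $\epsilon^0_{2a}(\kappa) := (a-\kappa)^2$ for $a \in \mathbb{N}_+$. Suppose that for each $j \in \mathbb{N}_+$, $\epsilon_j : [0, 1/2] \to \mathbb{R}$ is continuous and satisfies $|\epsilon_j(\kappa) - \epsilon^0_j(\kappa)| \le |\gamma|$ for all $\kappa \in [0,1/2]$, and set $E_{m,n}(k) := \epsilon_m(k_1) + \epsilon_n(k_2)$. If $S \subseteq \mathbb{N}_+^2$ is finite and $$\inf_{k \in [0,1/2]^2} \mathrm{dist}\big( \{E_{m,n}(k) : (m,n) \in S\},\ \{E_{m,n}(k) : (m,n) \notin S\} \big) > 0,$$ then $m + n \le 8K + 3$ for every $(m,n) \in S$, and consequently $|S| \le 32K^2 + 20K + 3$. -/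
open Real

/-- The `j`-th eigenvalue of the free 1D Bloch operator `(D_t - κ)²`:
`ε⁰_{2a-1}(κ) = (a-1+κ)²`, `ε⁰_{2a}(κ) = (a-κ)²`. -/
noncomputable def eps0 (j : ℕ) (κ : ℝ) : ℝ :=
  if j % 2 = 1 then ((((j + 1) / 2 : ℕ) : ℝ) - 1 + κ) ^ 2
  else (((j / 2 : ℕ) : ℝ) - κ) ^ 2

/-!
In the free spectrum, bands `j` and `j + 2t + 1` are monotone in opposite directions, so the gap
between them runs from `t(j + t)` to `(t + 1)(j + t)`. The band functions `(m, n + 1)` and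
`(m + 2t + 1, n)` cross exactly when the gap above band `m` in the first variable equals the gap
`n + 1` over `n` in the second, which runs from `0` to `n`. If these two ranges overlap with a
margin `4δ`, the crossing survives perturbations of the bands by at most `δ`, by the intermediate
value theorem on `[0, 1/2]²`. A set of bands that crosses no other band therefore contains
`(m + 2t + 1, n)` as soon as it contains `(m, n + 1)`, and symmetrically. For `t = 0` the move
slides along an antidiagonal; near the ends of a long antidiagonal a move with `t ≥ 1` is
available, and it increases `m + n`. A finite set can hence only meet short antidiagonals.
-/

open Set

lemma eps0_odd (a : ℕ) (κ : ℝ) : eps0 (2 * a + 1) κ = (a + κ) ^ 2 := by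
  have hmod : (2 * a + 1) % 2 = 1 := by omega
  have hdiv : (2 * a + 1 + 1) / 2 = a + 1 := by omega
  simp only [eps0, hmod, hdiv, if_true]
  push_cast
  ring

lemma eps0_even (a : ℕ) (κ : ℝ) : eps0 (2 * a) κ = (a - κ) ^ 2 := by
  simp [eps0]

/-- The quasimomentum at which the free bands `j` and `j + 1` touch, at height `j² / 4`; it depends
only on the parity of `j`. -/
noncomputable def touchPoint (j : ℕ) : ℝ := if Even j then 0 else 1 / 2

lemma touchPoint_mem (j : ℕ) : touchPoint j ∈ Icc (0 : ℝ) (1 / 2) := by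
  unfold touchPoint
  split_ifs <;> norm_num

lemma eps0_touchPoint_of_even_iff {i j : ℕ} (h : Even i ↔ Even j) :
    eps0 j (touchPoint i) = (j : ℝ) ^ 2 / 4 := by
  rcases Nat.even_or_odd' j with ⟨a, rfl | rfl⟩
  · simp only [touchPoint, h, even_two_mul, if_true, eps0_even]
    push_cast
    ring
  · simp only [touchPoint, h, Nat.not_even_bit1, if_false, eps0_odd]
    push_cast
    ring

lemma eps0_touchPoint_of_even_iff_not {i j : ℕ} (h : Even i ↔ ¬Even j) :
    eps0 j (touchPoint i) = ((j : ℝ) - 1) ^ 2 / 4 := by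
  rcases Nat.even_or_odd' j with ⟨a, rfl | rfl⟩
  · simp only [touchPoint, h, even_two_mul, not_true, if_false, eps0_even]
    push_cast
    ring
  · simp only [touchPoint, h, Nat.not_even_bit1, not_false_iff, if_true, eps0_odd]
    push_cast
    ring

lemma eps0_gap_touchPoint (j t : ℕ) :
    eps0 (j + 2 * t + 1) (touchPoint j) - eps0 j (touchPoint j) = t * (j + t) := by
  rw [eps0_touchPoint_of_even_iff Iff.rfl,
    eps0_touchPoint_of_even_iff_not (by simp [parity_simps])]
  push_cast
  ring

lemma eps0_gap_touchPoint_succ (j t : ℕ) :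
    eps0 (j + 2 * t + 1) (touchPoint (j + 1)) - eps0 j (touchPoint (j + 1)) =
      (t + 1) * (j + t) := by
  rw [eps0_touchPoint_of_even_iff (by simp [parity_simps]),
    eps0_touchPoint_of_even_iff_not (by simp [parity_simps])]
  push_cast
  ring

lemma exists_eq_of_isPreconnected {X Y α : Type*} [TopologicalSpace X]
    [TopologicalSpace Y] [LinearOrder α] [TopologicalSpace α] [OrderClosedTopology α]
    {s : Set X} {t : Set Y} (hs : IsPreconnected s) (ht : IsPreconnected t) {f : X → α} {g : Y → α}
    (hf : ContinuousOn f s) (hg : ContinuousOn g t) {a a' : X} {b b' : Y} (ha : a ∈ s)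
    (ha' : a' ∈ s) (hb : b ∈ t) (hb' : b' ∈ t) (hle : f a ≤ g b) (hge : g b' ≤ f a') :
    ∃ x ∈ s, ∃ y ∈ t, f x = g y := by
  obtain ⟨⟨x, y⟩, ⟨hx, hy⟩, hxy⟩ := (hs.prod ht).intermediate_value₂ (a := (a, b)) (b := (a', b'))
    ⟨ha, hb⟩ ⟨ha', hb'⟩ (hf.comp continuousOn_fst fun _ h => h.1)
    (hg.comp continuousOn_snd fun _ h => h.2) hle hge
  exact ⟨x, hx, y, hy, hxy⟩

lemma exists_gap_eq_gap {eps : ℕ → ℝ → ℝ} {δ : ℝ}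
    (hcont : ∀ j, 1 ≤ j → ContinuousOn (eps j) (Icc 0 (1 / 2)))
    (hbound : ∀ j, 1 ≤ j → ∀ κ ∈ Icc (0 : ℝ) (1 / 2), |eps j κ - eps0 j κ| ≤ δ)
    {m n t : ℕ} (hm : 1 ≤ m) (hn : 1 ≤ n) (hlow : t * (m + t) + 4 * δ ≤ n)
    (hhigh : 4 * δ ≤ (t + 1) * (m + t)) :
    ∃ k₁ ∈ Icc (0 : ℝ) (1 / 2), ∃ k₂ ∈ Icc (0 : ℝ) (1 / 2),
      eps (m + 2 * t + 1) k₁ - eps m k₁ = eps (n + 1) k₂ - eps n k₂ := by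
  have gap_close : ∀ i j l, 1 ≤ i → 1 ≤ j →
      |eps i (touchPoint l) - eps j (touchPoint l) -
        (eps0 i (touchPoint l) - eps0 j (touchPoint l))| ≤ 2 * δ := fun i j l hi hj => by
    have hi' := abs_le.1 (hbound i hi _ (touchPoint_mem l))
    have hj' := abs_le.1 (hbound j hj _ (touchPoint_mem l))
    exact abs_le.2 ⟨by linarith, by linarith⟩
  have gap_cont : ∀ i j, 1 ≤ i → 1 ≤ j →
      ContinuousOn (fun κ => eps i κ - eps j κ) (Icc 0 (1 / 2)) :=
    fun i j hi hj => (hcont i hi).sub (hcont j hj)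
  refine exists_eq_of_isPreconnected isPreconnected_Icc isPreconnected_Icc
    (gap_cont (m + 2 * t + 1) m (by omega) hm) (gap_cont (n + 1) n (by omega) hn)
    (touchPoint_mem m) (touchPoint_mem (m + 1)) (touchPoint_mem (n + 1)) (touchPoint_mem n) ?_ ?_
  · have hgap_m := abs_le.1 (gap_close (m + 2 * t + 1) m m (by omega) hm)
    have hgap_n := abs_le.1 (gap_close (n + 1) n (n + 1) (by omega) hn)
    have hfree_n : eps0 (n + 1) (touchPoint (n + 1)) - eps0 n (touchPoint (n + 1)) = n := by
      simpa using eps0_gap_touchPoint_succ n 0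
    rw [eps0_gap_touchPoint] at hgap_m
    linarith
  · have hgap_m := abs_le.1 (gap_close (m + 2 * t + 1) m (m + 1) (by omega) hm)
    have hgap_n := abs_le.1 (gap_close (n + 1) n n (by omega) hn)
    have hfree_n : eps0 (n + 1) (touchPoint n) - eps0 n (touchPoint n) = 0 := by
      simpa using eps0_gap_touchPoint n 0
    rw [eps0_gap_touchPoint_succ] at hgap_m
    linarith

/-- No band `E_p(k) = eps p.1 k₁ + eps p.2 k₂` with label `p ∈ S` meets, at any quasimomentum
`k ∈ [0, 1/2]²`, a band whose label lies outside `S`. Labels are pairs of positive integers. -/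
def NonCrossing (eps : ℕ → ℝ → ℝ) (S : Set (ℕ × ℕ)) : Prop :=
  ∀ k₁ ∈ Icc (0 : ℝ) (1 / 2), ∀ k₂ ∈ Icc (0 : ℝ) (1 / 2), ∀ p ∈ S, ∀ q : ℕ × ℕ,
    1 ≤ q.1 → 1 ≤ q.2 → q ∉ S → eps p.1 k₁ + eps p.2 k₂ ≠ eps q.1 k₁ + eps q.2 k₂

/-- The combinatorial trace of band crossings: `S` is closed under the moves
`(m, n + 1) ↦ (m + 2t + 1, n)` for which the ranges of the corresponding free gaps,
`[t(m + t), (t + 1)(m + t)]` and `[0, n]`, overlap with margin `L`. -/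
def StepClosed (L : ℕ) (S : Set (ℕ × ℕ)) : Prop :=
  ∀ m n t, 1 ≤ m → 1 ≤ n → t * (m + t) + L ≤ n → L ≤ (t + 1) * (m + t) →
    (m, n + 1) ∈ S → (m + 2 * t + 1, n) ∈ S

lemma NonCrossing.of_uniform_gap {eps : ℕ → ℝ → ℝ} {S : Set (ℕ × ℕ)} {c : ℝ} (hc : 0 < c)
    (hgap : ∀ k₁ ∈ Icc (0 : ℝ) (1 / 2), ∀ k₂ ∈ Icc (0 : ℝ) (1 / 2), ∀ p ∈ S, ∀ q : ℕ × ℕ,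
      1 ≤ q.1 → 1 ≤ q.2 → q ∉ S → c ≤ |(eps p.1 k₁ + eps p.2 k₂) - (eps q.1 k₁ + eps q.2 k₂)|) :
    NonCrossing eps S := fun k₁ hk₁ k₂ hk₂ p hp q hq₁ hq₂ hq =>
  sub_ne_zero.1 (abs_pos.1 (hc.trans_le (hgap k₁ hk₁ k₂ hk₂ p hp q hq₁ hq₂ hq)))

lemma NonCrossing.swap {eps : ℕ → ℝ → ℝ} {S : Set (ℕ × ℕ)} (h : NonCrossing eps S) :
    NonCrossing eps (Prod.swap ⁻¹' S) := fun k₁ hk₁ k₂ hk₂ p hp q hq₁ hq₂ hq => by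
  simpa only [Prod.fst_swap, Prod.snd_swap, add_comm] using
    h k₂ hk₂ k₁ hk₁ p.swap hp q.swap hq₂ hq₁ hq

lemma NonCrossing.stepClosed {eps : ℕ → ℝ → ℝ} {δ : ℝ} {S : Set (ℕ × ℕ)}
    (h : NonCrossing eps S)
    (hcont : ∀ j, 1 ≤ j → ContinuousOn (eps j) (Icc 0 (1 / 2)))
    (hbound : ∀ j, 1 ≤ j → ∀ κ ∈ Icc (0 : ℝ) (1 / 2), |eps j κ - eps0 j κ| ≤ δ)
    {L : ℕ} (hL : 4 * δ ≤ L) : StepClosed L S := by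
  intro m n t hm hn hlow hhigh hmem
  have hlow' : (t * (m + t) + L : ℝ) ≤ n := mod_cast hlow
  have hhigh' : (L : ℝ) ≤ (t + 1) * (m + t) := mod_cast hhigh
  obtain ⟨k₁, hk₁, k₂, hk₂, hgap⟩ :=
    exists_gap_eq_gap hcont hbound hm hn (by linarith) (hL.trans hhigh')
  by_contra hnot
  exact h k₁ hk₁ k₂ hk₂ _ hmem _ (by simp) hn hnot (by dsimp only; linarith)

lemma exists_pos_mul_add_le {L m n : ℕ} (hm : m ≤ L + 1) (hn : 3 * L + 2 ≤ n) :
    ∃ t, 1 ≤ t ∧ t * (m + t) + L ≤ n ∧ L ≤ (t + 1) * (m + t) := by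
  have hex : ∃ s, L ≤ (s + 1 + 1) * (m + (s + 1)) := ⟨L, by nlinarith⟩
  refine ⟨Nat.find hex + 1, by omega, ?_, Nat.find_spec hex⟩
  rcases hfind : Nat.find hex with _ | s
  · omega
  · have hpred : (s + 1 + 1) * (m + (s + 1)) < L :=
      not_le.1 (Nat.find_min hex (m := s) (by omega))
    nlinarith

namespace StepClosed

variable {L : ℕ} {S : Set (ℕ × ℕ)}

lemma exists_add_lt {m n : ℕ} (h : StepClosed L S) (hmem : (m, n) ∈ S) (hm : 1 ≤ m)
    (hmL : m ≤ L + 1) (hn : 3 * L + 3 ≤ n) : ∃ q ∈ S, m + n < q.1 + q.2 := by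
  obtain ⟨n, rfl⟩ := Nat.exists_eq_add_of_le' (show 1 ≤ n by omega)
  obtain ⟨t, ht, hlow, hhigh⟩ := exists_pos_mul_add_le (n := n) hmL (by omega)
  exact ⟨_, h m n t hm (by omega) hlow hhigh hmem, by dsimp only; omega⟩

lemma exists_toLex_lt {p : ℕ × ℕ} (h : StepClosed L S) (hswap : StepClosed L (Prod.swap ⁻¹' S))
    (hp : p ∈ S) (hp₁ : 1 ≤ p.1) (hp₂ : 1 ≤ p.2) (hlarge : 4 * L + 3 < p.1 + p.2) :
    ∃ q ∈ S, toLex (p.1 + p.2, p.2) < toLex (q.1 + q.2, q.2) := by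
  obtain ⟨m, n⟩ := p
  dsimp only at hp₁ hp₂ hlarge
  simp only [Prod.Lex.toLex_lt_toLex]
  rcases le_or_gt m (L + 1) with hmL | hmL
  · obtain ⟨q, hq, hlt⟩ := h.exists_add_lt hp hp₁ hmL (by omega)
    exact ⟨q, hq, Or.inl hlt⟩
  rcases le_or_gt n (L + 1) with hnL | hnL
  · obtain ⟨q, hq, hlt⟩ := hswap.exists_add_lt (m := n) (n := m) hp hp₂ hnL (by omega)
    exact ⟨q.swap, hq, Or.inl (by simp only [Prod.fst_swap, Prod.snd_swap]; omega)⟩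
  · obtain ⟨m, rfl⟩ := Nat.exists_eq_add_of_le' hp₁
    have hslide : (m, n + 1) ∈ S := hswap n m 0 hp₂ (by omega) (by omega) (by omega) hp
    exact ⟨(m, n + 1), hslide, Or.inr ⟨by dsimp only; omega, by simp⟩⟩

lemma add_le_of_finite (h : StepClosed L S) (hswap : StepClosed L (Prod.swap ⁻¹' S))
    (hfin : S.Finite) (hpos : ∀ p ∈ S, 1 ≤ p.1 ∧ 1 ≤ p.2) : ∀ p ∈ S, p.1 + p.2 ≤ 4 * L + 3 := by
  by_contra! ⟨p, hp, hlarge⟩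
  obtain ⟨r, hr, hmax⟩ :=
    exists_max_image S (fun q => toLex (q.1 + q.2, q.2)) hfin ⟨p, hp⟩
  have hpr : p.1 + p.2 ≤ r.1 + r.2 := Prod.Lex.monotone_fst _ _ (hmax p hp)
  obtain ⟨q, hq, hlt⟩ :=
    h.exists_toLex_lt hswap hr (hpos r hr).1 (hpos r hr).2 (hlarge.trans_le hpr)
  exact (hmax q hq).not_gt hlt

end StepClosed

lemma card_le_choose_two_of_add_le {S : Finset (ℕ × ℕ)} {N : ℕ}
    (hpos : ∀ p ∈ S, 1 ≤ p.1 ∧ 1 ≤ p.2) (hsum : ∀ p ∈ S, p.1 + p.2 ≤ N) :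
    S.card ≤ N.choose 2 := by
  have hcard : ((Finset.range N).sigma Finset.range).card = N.choose 2 := by
    simp only [Finset.card_sigma, Finset.card_range, Finset.sum_range_id, Nat.choose_two_right]
  rw [← hcard]
  refine Finset.card_le_card_of_injOn (fun p => ⟨p.1 + p.2 - 1, p.1 - 1⟩) (fun p hp => ?_)
    fun p hp q hq heq => ?_
  · have := hpos p hp
    have := hsum p hp
    simp only [Finset.mem_coe, Finset.mem_sigma, Finset.mem_range]
    omega
  · have := hpos p hp
    have := hpos q hq
    simp only [Sigma.mk.injEq, heq_eq_eq] at heq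
    ext <;> omega

theorem isolated_band_set_bound_general {eps : ℕ → ℝ → ℝ} {δ : ℝ}
    (hcont : ∀ j, 1 ≤ j → ContinuousOn (eps j) (Icc 0 (1 / 2)))
    (hbound : ∀ j, 1 ≤ j → ∀ κ ∈ Icc (0 : ℝ) (1 / 2), |eps j κ - eps0 j κ| ≤ δ)
    {S : Finset (ℕ × ℕ)} (hS : ∀ p ∈ S, 1 ≤ p.1 ∧ 1 ≤ p.2)
    (hcross : NonCrossing eps (S : Set (ℕ × ℕ))) :
    (∀ p ∈ S, p.1 + p.2 ≤ 4 * ⌈4 * δ⌉₊ + 3) ∧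
      S.card ≤ (2 * ⌈4 * δ⌉₊ + 1) * (4 * ⌈4 * δ⌉₊ + 3) := by
  have hL : 4 * δ ≤ ⌈4 * δ⌉₊ := Nat.le_ceil _
  have hsum : ∀ p ∈ S, p.1 + p.2 ≤ 4 * ⌈4 * δ⌉₊ + 3 :=
    (hcross.stepClosed hcont hbound hL).add_le_of_finite
      (hcross.swap.stepClosed hcont hbound hL) S.finite_toSet hS
  refine ⟨hsum, (card_le_choose_two_of_add_le hS hsum).trans_eq ?_⟩
  rw [Nat.choose_two_right]
  exact Nat.div_eq_of_eq_mul_left two_pos (by rw [Nat.add_sub_assoc (by norm_num)]; ring)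

/-- Quantitative form of Theorem 5: if a finite set `S` of band labels is
uniformly isolated from all other bands, then every `(m,n) ∈ S` satisfies
`m + n ≤ 8K + 3` with `K = ⌈4|γ|⌉ + 1`, and hence `|S| ≤ 32K² + 20K + 3`. -/
theorem isolated_band_set_bound (γ : ℝ) (eps : ℕ → ℝ → ℝ)
    (hcont : ∀ j : ℕ, 1 ≤ j → ContinuousOn (eps j) (Set.Icc (0 : ℝ) (1 / 2)))
    (hbound : ∀ j : ℕ, 1 ≤ j → ∀ κ ∈ Set.Icc (0 : ℝ) (1 / 2),
      |eps j κ - eps0 j κ| ≤ |γ|)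
    (S : Finset (ℕ × ℕ)) (hS : ∀ p ∈ S, 1 ≤ p.1 ∧ 1 ≤ p.2)
    (hiso : ∃ c > (0 : ℝ), ∀ k1 ∈ Set.Icc (0 : ℝ) (1 / 2),
      ∀ k2 ∈ Set.Icc (0 : ℝ) (1 / 2), ∀ p ∈ S, ∀ q : ℕ × ℕ,
        1 ≤ q.1 → 1 ≤ q.2 → q ∉ S →
        c ≤ |(eps p.1 k1 + eps p.2 k2) - (eps q.1 k1 + eps q.2 k2)|) :
    (∀ p ∈ S, p.1 + p.2 ≤ 8 * (⌈4 * |γ|⌉₊ + 1) + 3) ∧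
    S.card ≤ 32 * (⌈4 * |γ|⌉₊ + 1) ^ 2 + 20 * (⌈4 * |γ|⌉₊ + 1) + 3 := by
  obtain ⟨c, hc, hgap⟩ := hiso
  obtain ⟨hsum, hcard⟩ :=
    isolated_band_set_bound_general hcont hbound hS (NonCrossing.of_uniform_gap hc hgap)
  exact ⟨fun p hp => (hsum p hp).trans (by omega), hcard.trans (by nlinarith)⟩
end

section
/- There exists $\gamma_0 > 0$ with the following property. Let $\gamma \in \mathbb{R}$ with $|\gamma| \le \gamma_0$. Define $\epsilon^0_{2a-1}(\kappa) := (a-1+\kappa)^2$, $\epsilon^0_{2a}(\kappa) := (a-\kappa)^2$ for $a \in \mathbb{N}_+$. Suppose that for each $j \in \mathbb{N}_+$, $\epsilon_j : [0, 1/2] \to \mathbb{R}$ is continuous and satisfies $|\epsilon_j(\kappa) - \epsilon^0_j(\kappa)| \le |\gamma|$ for all $\kappa \in [0,1/2]$, and set $E_{m,n}(k) := \epsilon_m(k_1) + \epsilon_n(k_2)$. If $S \subseteq \mathbb{N}_+^2$ is finite and $$\inf_{k \in [0,1/2]^2} \mathrm{dist}\big( \{E_{m,n}(k) : (m,n) \in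 S\},\ \{E_{m,n}(k) : (m,n) \notin S\} \big) > 0,$$ then $S \subseteq A_2 \cup A_3$, where $A_r := \{(m,n) \in \mathbb{N}_+^2 : m + n = r\}$. -/
open Real

/-!
Two bands that exchange order somewhere on the quasimomentum square must meet, so a set of labels
isolated from its complement is closed under such crossings. For the free bands,
`ε⁰_{m+1} - ε⁰_m` takes both values `0` and `m` on `[0, 1/2]`. Hence `(m, n + 1)` and `(m + 1, n)`
exchange order with a margin of at least `1`, and so do `(m + 1, 1)` and `(m, 3)` for `2 ≤ m`,
since `ε⁰_3 - ε⁰_1 = 1` at `0`. An error of at most `1/4` in each one-dimensional band cannot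
destroy these crossings. The first kind connects each diagonal `A_r`, the second connects `A_r`
to `A_{r+1}` for `4 ≤ r`, so an isolated set meeting some `A_r` with `4 ≤ r` contains all of them
and is infinite.
-/

open Relation

theorem mem_of_reflTransGen {α : Type*} {r : α → α → Prop} {S : Set α}
    (hS : ∀ a ∈ S, ∀ b ∉ S, ¬ r a b) {a b : α} (hab : ReflTransGen r a b) (ha : a ∈ S) :
    b ∈ S := by
  induction hab with
  | refl => exact ha
  | tail _ hbc hb => exact of_not_not fun hc => hS _ hb _ hc hbc

/-- The interval of quasimomenta `[0, 1/2]`, half of the period cell `[-1/2, 1/2]`. -/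
abbrev halfZone : Set ℝ := Set.Icc 0 (1 / 2)

/-- The set `ℕ₊²` of labels of the two-dimensional bands. -/
def bandLabels : Set (ℕ × ℕ) := {p | 1 ≤ p.1 ∧ 1 ≤ p.2}

/-- The two-dimensional band `E_{m,n}(k) = ε_m(k₁) + ε_n(k₂)`, with label `p = (m, n)`. -/
def bandEnergy (ε : ℕ → ℝ → ℝ) (p : ℕ × ℕ) (k : ℝ × ℝ) : ℝ := ε p.1 k.1 + ε p.2 k.2

/-- The bands labelled `p` and `q` take the same value at some quasimomentum. Labels outside `ℕ₊²`
are excluded here, so that chains of crossings stay among the bands. -/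
def BandsCross (ε : ℕ → ℝ → ℝ) (p q : ℕ × ℕ) : Prop :=
  p ∈ bandLabels ∧ q ∈ bandLabels ∧
    ∃ k ∈ halfZone ×ˢ halfZone, bandEnergy ε p k = bandEnergy ε q k

/-- The one-dimensional bands `ε_j`, `1 ≤ j`, are continuous and uniformly `δ`-close to the free
bands `ε⁰_j`; nothing is asked of the meaningless index `0`. -/
structure IsFreeBandPerturbation (δ : ℝ) (ε : ℕ → ℝ → ℝ) : Prop where
  continuousOn : ∀ j, 1 ≤ j → ContinuousOn (ε j) halfZone
  abs_sub_le : ∀ j, 1 ≤ j → ∀ κ ∈ halfZone, |ε j κ - eps0 j κ| ≤ δ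

theorem eps0_two_mul_add_one (t : ℕ) (κ : ℝ) : eps0 (2 * t + 1) κ = (t + κ) ^ 2 := by
  have hodd : (2 * t + 1) % 2 = 1 := by omega
  have hhalf : (2 * t + 1 + 1) / 2 = t + 1 := by omega
  simp only [eps0, hodd, hhalf, if_true, Nat.cast_add, Nat.cast_one, add_sub_cancel_right]

theorem eps0_two_mul (t : ℕ) (κ : ℝ) : eps0 (2 * t) κ = (t - κ) ^ 2 := by
  have heven : ¬ 2 * t % 2 = 1 := by omega
  have hhalf : 2 * t / 2 = t := by omega
  simp only [eps0, heven, hhalf, if_false]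

theorem eps0_succ_sub_of_even (t : ℕ) (κ : ℝ) :
    eps0 (2 * t + 1) κ - eps0 (2 * t) κ = (2 * t : ℕ) * (2 * κ) := by
  rw [eps0_two_mul_add_one, eps0_two_mul]
  push_cast
  ring

theorem eps0_succ_sub_of_odd (t : ℕ) (κ : ℝ) :
    eps0 (2 * t + 1 + 1) κ - eps0 (2 * t + 1) κ = (2 * t + 1 : ℕ) * (1 - 2 * κ) := by
  rw [show 2 * t + 1 + 1 = 2 * (t + 1) by ring, eps0_two_mul_add_one, eps0_two_mul]
  push_cast
  ring

theorem exists_eps0_succ_sub_eq_mul (m : ℕ) {s : ℝ} (hs : s ∈ Set.Icc (0 : ℝ) 1) :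
    ∃ κ ∈ halfZone, eps0 (m + 1) κ - eps0 m κ = m * s := by
  obtain ⟨hs0, hs1⟩ := hs
  rcases Nat.even_or_odd' m with ⟨t, rfl | rfl⟩
  · refine ⟨s / 2, ⟨by linarith, by linarith⟩, ?_⟩
    rw [eps0_succ_sub_of_even, mul_div_cancel₀ s two_ne_zero]
  · refine ⟨(1 - s) / 2, ⟨by linarith, by linarith⟩, ?_⟩
    rw [eps0_succ_sub_of_odd, mul_div_cancel₀ (1 - s) two_ne_zero, sub_sub_cancel]

theorem exists_eps0_succ_eq (m : ℕ) : ∃ κ ∈ halfZone, eps0 (m + 1) κ = eps0 m κ := by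
  simpa only [mul_zero, sub_eq_zero] using
    exists_eps0_succ_sub_eq_mul m (Set.left_mem_Icc.2 zero_le_one)

theorem exists_eps0_succ_eq_add (m : ℕ) : ∃ κ ∈ halfZone, eps0 (m + 1) κ = m + eps0 m κ := by
  simpa only [mul_one, sub_eq_iff_eq_add] using
    exists_eps0_succ_sub_eq_mul m (Set.right_mem_Icc.2 zero_le_one)

theorem eps0_three_zero : eps0 3 0 = 1 + eps0 1 0 := by
  rw [eps0_two_mul_add_one 1, eps0_two_mul_add_one 0]
  norm_num

instance BandsCross.instSymm (ε : ℕ → ℝ → ℝ) : Std.Symm (BandsCross ε) where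
  symm := fun _ _ ⟨hp, hq, k, hk, hE⟩ => ⟨hq, hp, k, hk, hE.symm⟩

theorem not_bandsCross_of_gap {ε : ℕ → ℝ → ℝ} {p q : ℕ × ℕ} {c : ℝ} (hc : 0 < c)
    (hgap : ∀ k ∈ halfZone ×ˢ halfZone, c ≤ |bandEnergy ε p k - bandEnergy ε q k|) :
    ¬ BandsCross ε p q := by
  rintro ⟨-, -, k, hk, hE⟩
  have hle := hgap k hk
  rw [sub_eq_zero.2 hE, abs_zero] at hle
  exact hc.not_ge hle

theorem infinite_bandLabels_four_le : {q ∈ bandLabels | 4 ≤ q.1 + q.2}.Infinite :=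
  Set.infinite_of_injective_forall_mem (f := fun t : ℕ => (t + 3, 1))
    (fun _ _ h => Nat.add_right_cancel (Prod.ext_iff.1 h).1)
    fun t => ⟨⟨by omega, le_rfl⟩, by simp only; omega⟩

namespace IsFreeBandPerturbation

variable {δ : ℝ} {ε : ℕ → ℝ → ℝ}

theorem continuousOn_bandEnergy (hε : IsFreeBandPerturbation δ ε) {p : ℕ × ℕ}
    (hp : p ∈ bandLabels) : ContinuousOn (bandEnergy ε p) (halfZone ×ˢ halfZone) :=
  ((hε.continuousOn p.1 hp.1).comp continuousOn_fst fun _ hk => hk.1).add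
    ((hε.continuousOn p.2 hp.2).comp continuousOn_snd fun _ hk => hk.2)

theorem abs_bandEnergy_sub_le (hε : IsFreeBandPerturbation δ ε) {p : ℕ × ℕ}
    (hp : p ∈ bandLabels) {k : ℝ × ℝ} (hk : k ∈ halfZone ×ˢ halfZone) :
    |bandEnergy ε p k - bandEnergy eps0 p k| ≤ 2 * δ :=
  calc |bandEnergy ε p k - bandEnergy eps0 p k|
      = |(ε p.1 k.1 - eps0 p.1 k.1) + (ε p.2 k.2 - eps0 p.2 k.2)| := by
        rw [bandEnergy, bandEnergy, add_sub_add_comm]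
    _ ≤ |ε p.1 k.1 - eps0 p.1 k.1| + |ε p.2 k.2 - eps0 p.2 k.2| := abs_add_le _ _
    _ ≤ δ + δ := add_le_add (hε.abs_sub_le p.1 hp.1 k.1 hk.1) (hε.abs_sub_le p.2 hp.2 k.2 hk.2)
    _ = 2 * δ := (two_mul δ).symm

theorem bandEnergy_le_bandEnergy (hε : IsFreeBandPerturbation δ ε) {p q : ℕ × ℕ}
    (hp : p ∈ bandLabels) (hq : q ∈ bandLabels) {k : ℝ × ℝ} (hk : k ∈ halfZone ×ˢ halfZone)
    (h : bandEnergy eps0 p k + 4 * δ ≤ bandEnergy eps0 q k) :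
    bandEnergy ε p k ≤ bandEnergy ε q k := by
  have hpk := (abs_le.1 (hε.abs_bandEnergy_sub_le hp hk)).2
  have hqk := (abs_le.1 (hε.abs_bandEnergy_sub_le hq hk)).1
  linarith

theorem bandsCross_of_eps0 (hε : IsFreeBandPerturbation δ ε) {p q : ℕ × ℕ}
    (hp : p ∈ bandLabels) (hq : q ∈ bandLabels) {k k' : ℝ × ℝ}
    (hk : k ∈ halfZone ×ˢ halfZone) (hk' : k' ∈ halfZone ×ˢ halfZone)
    (h : bandEnergy eps0 p k + 4 * δ ≤ bandEnergy eps0 q k)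
    (h' : bandEnergy eps0 q k' + 4 * δ ≤ bandEnergy eps0 p k') : BandsCross ε p q :=
  ⟨hp, hq, (isPreconnected_Icc.prod isPreconnected_Icc).intermediate_value₂ hk hk'
    (hε.continuousOn_bandEnergy hp) (hε.continuousOn_bandEnergy hq)
    (hε.bandEnergy_le_bandEnergy hp hq hk h) (hε.bandEnergy_le_bandEnergy hq hp hk' h')⟩

theorem bandsCross_diagonal (hε : IsFreeBandPerturbation δ ε) (hδ : δ ≤ 1 / 4) {m n : ℕ}
    (hm : 1 ≤ m) (hn : 1 ≤ n) : BandsCross ε (m, n + 1) (m + 1, n) := by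
  obtain ⟨a, ha, hEa⟩ := exists_eps0_succ_eq m
  obtain ⟨a', ha', hEa'⟩ := exists_eps0_succ_eq_add m
  obtain ⟨b, hb, hEb⟩ := exists_eps0_succ_eq n
  obtain ⟨b', hb', hEb'⟩ := exists_eps0_succ_eq_add n
  have hm' : (1 : ℝ) ≤ m := by exact_mod_cast hm
  have hn' : (1 : ℝ) ≤ n := by exact_mod_cast hn
  refine hε.bandsCross_of_eps0 (k := (a', b)) (k' := (a, b')) ⟨hm, n.succ_pos⟩ ⟨m.succ_pos, hn⟩
    ⟨ha', hb⟩ ⟨ha, hb'⟩ ?_ ?_ <;> simp only [bandEnergy] <;> linarith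

theorem bandsCross_next_diagonal (hε : IsFreeBandPerturbation δ ε) (hδ : δ ≤ 1 / 4) {m : ℕ}
    (hm : 2 ≤ m) : BandsCross ε (m + 1, 1) (m, 3) := by
  obtain ⟨a, ha, hEa⟩ := exists_eps0_succ_eq m
  obtain ⟨a', ha', hEa'⟩ := exists_eps0_succ_eq_add m
  have hm' : (2 : ℝ) ≤ m := by exact_mod_cast hm
  have h0 : (0 : ℝ) ∈ halfZone := Set.left_mem_Icc.2 (by norm_num)
  have hE3 := eps0_three_zero
  refine hε.bandsCross_of_eps0 (k := (a, 0)) (k' := (a', 0)) ⟨m.succ_pos, le_rfl⟩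
    ⟨one_le_two.trans hm, by norm_num⟩ ⟨ha, h0⟩ ⟨ha', h0⟩ ?_ ?_ <;>
    simp only [bandEnergy] <;> linarith

theorem reflTransGen_bandsCross_diagonal (hε : IsFreeBandPerturbation δ ε) (hδ : δ ≤ 1 / 4)
    {m : ℕ} (hm : 1 ≤ m) (n : ℕ) : ReflTransGen (BandsCross ε) (m, n + 1) (m + n, 1) := by
  induction n generalizing m with
  | zero => exact .refl
  | succ n ih =>
    rw [← add_assoc, add_right_comm m n 1]
    exact .head (hε.bandsCross_diagonal hδ hm n.succ_pos) (ih m.succ_pos)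

theorem reflTransGen_bandsCross_three_one_left (hε : IsFreeBandPerturbation δ ε) (hδ : δ ≤ 1 / 4)
    {r : ℕ} (hr : 3 ≤ r) : ReflTransGen (BandsCross ε) (3, 1) (r, 1) := by
  induction r, hr using Nat.le_induction with
  | base => exact .refl
  | succ r hr ih =>
    obtain ⟨m, rfl⟩ : ∃ m, r = m + 1 := ⟨r - 1, by omega⟩
    have hm : 2 ≤ m := by omega
    exact (ih.tail (hε.bandsCross_next_diagonal hδ hm)).trans
      (hε.reflTransGen_bandsCross_diagonal hδ (one_le_two.trans hm) 2)

theorem reflTransGen_bandsCross (hε : IsFreeBandPerturbation δ ε) (hδ : δ ≤ 1 / 4)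
    {p q : ℕ × ℕ} (hp : p ∈ bandLabels) (hp4 : 4 ≤ p.1 + p.2)
    (hq : q ∈ bandLabels) (hq4 : 4 ≤ q.1 + q.2) : ReflTransGen (BandsCross ε) p q := by
  have hbase : ∀ {p : ℕ × ℕ}, p ∈ bandLabels → 4 ≤ p.1 + p.2 →
      ReflTransGen (BandsCross ε) (3, 1) p := by
    rintro ⟨m, n⟩ ⟨hm, hn⟩ hmn
    obtain ⟨n, rfl⟩ := Nat.exists_eq_add_of_le' hn
    have hr : 3 ≤ m + n := by simp only at hmn; omega
    exact (hε.reflTransGen_bandsCross_three_one_left hδ hr).trans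
      (symm (hε.reflTransGen_bandsCross_diagonal hδ hm n))
  exact (symm (hbase hp hp4)).trans (hbase hq hq4)

end IsFreeBandPerturbation

theorem isolated_bands_small_gamma_general {δ : ℝ} {ε : ℕ → ℝ → ℝ} (hδ : δ ≤ 1 / 4)
    (hε : IsFreeBandPerturbation δ ε) {S : Set (ℕ × ℕ)}
    (hS : ∀ p ∈ S, ∀ q ∉ S, ¬ BandsCross ε p q) :
    (∀ p ∈ S ∩ bandLabels, p.1 + p.2 = 2 ∨ p.1 + p.2 = 3) ∨
      {q ∈ bandLabels | 4 ≤ q.1 + q.2} ⊆ S := by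
  refine or_iff_not_imp_left.2 fun hlow => ?_
  push Not at hlow
  obtain ⟨p, ⟨hpS, hp_fst, hp_snd⟩, hp_ne_two, hp_ne_three⟩ := hlow
  have hp4 : 4 ≤ p.1 + p.2 := by omega
  exact fun q ⟨hq, hq4⟩ =>
    mem_of_reflTransGen hS (hε.reflTransGen_bandsCross hδ ⟨hp_fst, hp_snd⟩ hp4 hq hq4) hpS

/-- Proposition 5.1 of the paper: for `|γ|` sufficiently small, any finite set
`S` of band labels that is uniformly isolated from the other bands satisfies
`S ⊆ A₂ ∪ A₃`, where `A_r = {(m,n) ∈ ℕ₊² : m + n = r}`. -/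
theorem isolated_bands_small_gamma :
    ∃ γ0 > (0 : ℝ), ∀ γ : ℝ, |γ| ≤ γ0 → ∀ eps : ℕ → ℝ → ℝ,
      (∀ j : ℕ, 1 ≤ j → ContinuousOn (eps j) (Set.Icc (0 : ℝ) (1 / 2))) →
      (∀ j : ℕ, 1 ≤ j → ∀ κ ∈ Set.Icc (0 : ℝ) (1 / 2),
        |eps j κ - eps0 j κ| ≤ |γ|) →
      ∀ S : Finset (ℕ × ℕ), (∀ p ∈ S, 1 ≤ p.1 ∧ 1 ≤ p.2) →
      (∃ c > (0 : ℝ), ∀ k1 ∈ Set.Icc (0 : ℝ) (1 / 2),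
        ∀ k2 ∈ Set.Icc (0 : ℝ) (1 / 2), ∀ p ∈ S, ∀ q : ℕ × ℕ,
          1 ≤ q.1 → 1 ≤ q.2 → q ∉ S →
          c ≤ |(eps p.1 k1 + eps p.2 k2) - (eps q.1 k1 + eps q.2 k2)|) →
      ∀ p ∈ S, p.1 + p.2 = 2 ∨ p.1 + p.2 = 3 := by
  refine ⟨1 / 4, by norm_num, fun γ hγ eps hcont hclose S hS ⟨c, hc, hgap⟩ p hp => ?_⟩
  have hisolated : ∀ p ∈ S, ∀ q ∉ S, ¬ BandsCross eps p q := fun p hp q hq hpq =>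
    not_bandsCross_of_gap hc
      (fun k hk => hgap k.1 hk.1 k.2 hk.2 p hp q hpq.2.1.1 hpq.2.1.2 hq) hpq
  exact (isolated_bands_small_gamma_general hγ ⟨hcont, hclose⟩ (S := S) hisolated).resolve_right
    (fun hsub => infinite_bandLabels_four_le (S.finite_toSet.subset hsub)) p ⟨hp, hS p hp⟩
end
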